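/- For every solution of the reduced backward Ricci flow system of class U3S3 with A(0) = λ₁ > λ₃ = C(0), the quantity (A−C)/(AC²) is conserved, (A(t)−C(t))/(A(t)C(t)²) = (λ₁−λ₃)/(λ₁λ₃²) =: Λ for all t ∈ [0,T); consequently C(t) = (−1 + √(1 + 4ΛA(t)²))/(2ΛA(t)) and A(t)/2 + (1/(4√Λ))·arsinh(2√Λ·A(t)) = t + λ₁/2 + (1/(4√Λ))·arsinh(2√Λ·λ₁) for all t ∈ [0,T). -/

import Mathlib

open Real Set ENNReal

/-- The time domain `[0, T)` where `T ∈ (0, ∞]` is an extended nonnegative real. -/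
def flowDomain (T : ℝ≥0∞) : Set ℝ := {t : ℝ | 0 ≤ t ∧ ENNReal.ofReal t < T}

/-!
Along the flow `(A - C) / (A * C ^ 2)` has zero derivative, so it keeps its initial value `Λ`. At a
fixed time `(A - C) / (A * C ^ 2) = Λ` is a quadratic equation for `C`, and its discriminant
`1 + 4 * Λ * A ^ 2` is the square of `2 * A / C - 1`, which is positive because `C < A`. Eliminating
`C` leaves the separable equation `(1 + 1 / √(1 + 4 * Λ * A ^ 2)) / 2 * A' = 1`, whose integral is
the relation between `A` and `t`.
-/

/-- The first integral of the reduced flow: the quantity `(A - C) / (A * C ^ 2)` as a function of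
the values `a`, `c` of the two metric coefficients. -/
noncomputable def firstIntegral (a c : ℝ) : ℝ := (a - c) / (a * c ^ 2)

/-- The time, up to an additive constant, at which the first coefficient takes the value `a` along
a solution whose first integral is `Λ`. It is only meaningful for `0 < Λ`. -/
noncomputable def flowTime (Λ a : ℝ) : ℝ := a / 2 + 1 / (4 * √Λ) * arsinh (2 * √Λ * a)

theorem convex_flowDomain (T : ℝ≥0∞) : Convex ℝ (flowDomain T) :=
  OrdConnected.convex ⟨fun _ hx _ hy _ hz ↦
    ⟨hx.1.trans hz.1, (ENNReal.ofReal_le_ofReal hz.2).trans_lt hy.2⟩⟩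

theorem zero_mem_flowDomain {T : ℝ≥0∞} (hT : 0 < T) : (0 : ℝ) ∈ flowDomain T :=
  ⟨le_rfl, by rwa [ENNReal.ofReal_zero]⟩

theorem sub_eq_smul_of_hasDerivWithinAt_const {𝕜 E : Type*} [RCLike 𝕜] [NormedAddCommGroup E]
    [NormedSpace 𝕜 E] {f : 𝕜 → E} {v : E} {s : Set 𝕜} {x y : 𝕜} (hs : Convex ℝ s)
    (hf : ∀ z ∈ s, HasDerivWithinAt f v s z) (hx : x ∈ s) (hy : y ∈ s) :
    f y - f x = (y - x) • v := by
  have hderiv : ∀ z ∈ s, HasDerivWithinAt (fun z ↦ f z - z • v) 0 s z := fun z hz ↦ by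
    simpa only [id, one_smul, sub_self] using
      (hf z hz).fun_sub ((hasDerivWithinAt_id z s).smul_const v)
  have hnorm := hs.norm_image_sub_le_of_norm_hasDerivWithin_le hderiv
    (fun _ _ ↦ norm_zero.le) hx hy
  rw [zero_mul, norm_le_zero_iff] at hnorm
  rw [sub_smul, ← sub_eq_zero, ← hnorm]
  abel

section Algebra

variable {a c : ℝ}

theorem firstIntegral_pos_iff (ha : 0 < a) (hc : c ≠ 0) : 0 < firstIntegral a c ↔ c < a := by
  rw [firstIntegral, div_pos_iff_of_pos_right (by positivity), sub_pos]

theorem sqrt_one_add_four_mul_firstIntegral (hc : 0 < c) (hca : c ≤ 2 * a) :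
    √(1 + 4 * firstIntegral a c * a ^ 2) = 2 * a / c - 1 := by
  have hsq : 1 + 4 * firstIntegral a c * a ^ 2 = (2 * a / c - 1) ^ 2 := by
    rw [firstIntegral]
    field_simp
    ring
  rw [hsq, sqrt_sq (sub_nonneg.2 ((one_le_div hc).2 hca))]

theorem eq_neg_one_add_sqrt_div_firstIntegral (hc : 0 < c) (hca : c ≤ 2 * a) (hne : c ≠ a) :
    c = (-1 + √(1 + 4 * firstIntegral a c * a ^ 2)) / (2 * firstIntegral a c * a) := by
  have ha : 0 < a := by linarith
  have hsub : a - c ≠ 0 := sub_ne_zero.2 hne.symm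
  rw [sqrt_one_add_four_mul_firstIntegral hc hca, firstIntegral]
  field_simp
  ring

theorem hasDerivAt_flowTime {Λ : ℝ} (hΛ : 0 < Λ) (a : ℝ) :
    HasDerivAt (flowTime Λ) ((1 + 1 / √(1 + 4 * Λ * a ^ 2)) / 2) a := by
  have hsq : 1 + (2 * √Λ * a) ^ 2 = 1 + 4 * Λ * a ^ 2 := by
    rw [mul_pow, mul_pow, sq_sqrt hΛ.le]
    norm_num
  have harsinh := ((hasDerivAt_id a).const_mul (2 * √Λ)).arsinh
  refine (((hasDerivAt_id a).div_const 2).add (harsinh.const_mul (1 / (4 * √Λ)))).congr_deriv ?_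
  simp only [id, hsq, smul_eq_mul]
  field_simp
  ring

end Algebra

section Flow

variable {A C : ℝ → ℝ} {s : Set ℝ} {t : ℝ}

theorem hasDerivWithinAt_firstIntegral (hAt : A t ≠ 0) (hCt : C t ≠ 0)
    (hA : HasDerivWithinAt A (2 - C t / A t) s t)
    (hC : HasDerivWithinAt C (C t ^ 2 / A t ^ 2) s t) :
    HasDerivWithinAt (fun τ ↦ firstIntegral (A τ) (C τ)) 0 s t := by
  refine ((hA.fun_sub hC).fun_div (hA.fun_mul (hC.fun_pow 2)) (by positivity)).congr_deriv ?_
  field_simp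
  push_cast
  ring

theorem hasDerivWithinAt_flowTime (hCt : 0 < C t) (hCA : C t < A t)
    (hA : HasDerivWithinAt A (2 - C t / A t) s t) :
    HasDerivWithinAt (fun τ ↦ flowTime (firstIntegral (A t) (C t)) (A τ)) 1 s t := by
  have hAt : 0 < A t := hCt.trans hCA
  have hden : 2 * A t - C t ≠ 0 := by linarith
  have hΛ : 0 < firstIntegral (A t) (C t) := (firstIntegral_pos_iff hAt hCt.ne').2 hCA
  refine ((hasDerivAt_flowTime hΛ (A t)).comp_hasDerivWithinAt t hA).congr_deriv ?_
  rw [sqrt_one_add_four_mul_firstIntegral hCt (by linarith)]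
  field_simp
  ring

end Flow

theorem stmt18_general {A C : ℝ → ℝ} {s : Set ℝ} {t₀ Λ : ℝ} (hs : Convex ℝ s) (ht₀ : t₀ ∈ s)
    (hpos : ∀ t ∈ s, 0 < A t ∧ 0 < C t)
    (hA : ∀ t ∈ s, HasDerivWithinAt A (2 - C t / A t) s t)
    (hC : ∀ t ∈ s, HasDerivWithinAt C (C t ^ 2 / A t ^ 2) s t)
    (hlt : C t₀ < A t₀) (hΛ : firstIntegral (A t₀) (C t₀) = Λ) {t : ℝ} (ht : t ∈ s) :
    firstIntegral (A t) (C t) = Λ ∧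
      C t = (-1 + √(1 + 4 * Λ * A t ^ 2)) / (2 * Λ * A t) ∧
      flowTime Λ (A t) = t - t₀ + flowTime Λ (A t₀) := by
  have hconst : ∀ τ ∈ s, firstIntegral (A τ) (C τ) = Λ := fun τ hτ ↦ by
    have hsub := sub_eq_smul_of_hasDerivWithinAt_const hs (fun u hu ↦
      hasDerivWithinAt_firstIntegral (hpos u hu).1.ne' (hpos u hu).2.ne' (hA u hu) (hC u hu))
      ht₀ hτ
    rwa [smul_zero, sub_eq_zero, hΛ] at hsub
  have hCA : ∀ τ ∈ s, C τ < A τ := fun τ hτ ↦ by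
    rw [← firstIntegral_pos_iff (hpos τ hτ).1 (hpos τ hτ).2.ne', hconst τ hτ, ← hΛ]
    exact (firstIntegral_pos_iff (hpos t₀ ht₀).1 (hpos t₀ ht₀).2.ne').2 hlt
  have htime : ∀ τ ∈ s, HasDerivWithinAt (fun u ↦ flowTime Λ (A u)) 1 s τ := fun τ hτ ↦ by
    simpa only [hconst τ hτ] using
      hasDerivWithinAt_flowTime (hpos τ hτ).2 (hCA τ hτ) (hA τ hτ)
  refine ⟨hconst t ht, ?_, ?_⟩
  · rw [← hconst t ht]
    exact eq_neg_one_add_sqrt_div_firstIntegral (hpos t ht).2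
      (by linarith [hCA t ht, hpos t ht]) (hCA t ht).ne
  · rw [← sub_eq_iff_eq_add, sub_eq_smul_of_hasDerivWithinAt_const hs htime ht₀ ht, smul_eq_mul,
      mul_one]

/-- For every solution of the reduced backward Ricci flow system of class `U3S3`
(case `A = B > C`) with `A(0) = λ₁ > λ₃ = C(0)`, the quantity `(A−C)/(AC²)` is conserved,
equal to `Λ = (λ₁−λ₃)/(λ₁λ₃²)`; consequently `C = (−1 + √(1 + 4ΛA²))/(2ΛA)` and
`A/2 + (1/(4√Λ))·arsinh(2√Λ·A) = t + λ₁/2 + (1/(4√Λ))·arsinh(2√Λ·λ₁)` on `[0,T)`. -/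
theorem stmt18 (T : ℝ≥0∞) (hT : 0 < T)
    (lam1 lam3 : ℝ) (hlam3 : 0 < lam3) (hlt : lam3 < lam1)
    (A C : ℝ → ℝ)
    (hpos : ∀ t ∈ flowDomain T, 0 < A t ∧ 0 < C t)
    (hA : ∀ t ∈ flowDomain T,
      HasDerivWithinAt A (2 - C t / A t) (flowDomain T) t)
    (hC : ∀ t ∈ flowDomain T,
      HasDerivWithinAt C (C t ^ 2 / A t ^ 2) (flowDomain T) t)
    (hA0 : A 0 = lam1) (hC0 : C 0 = lam3) :
    ∀ t ∈ flowDomain T,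
      (A t - C t) / (A t * C t ^ 2) = (lam1 - lam3) / (lam1 * lam3 ^ 2) ∧
      C t = (-1 + Real.sqrt (1 + 4 * ((lam1 - lam3) / (lam1 * lam3 ^ 2)) * A t ^ 2)) /
              (2 * ((lam1 - lam3) / (lam1 * lam3 ^ 2)) * A t) ∧
      A t / 2 + 1 / (4 * Real.sqrt ((lam1 - lam3) / (lam1 * lam3 ^ 2))) *
          Real.arsinh (2 * Real.sqrt ((lam1 - lam3) / (lam1 * lam3 ^ 2)) * A t) =
        t + lam1 / 2 + 1 / (4 * Real.sqrt ((lam1 - lam3) / (lam1 * lam3 ^ 2))) *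
          Real.arsinh (2 * Real.sqrt ((lam1 - lam3) / (lam1 * lam3 ^ 2)) * lam1) := by
  subst hA0 hC0
  intro t ht
  simpa only [firstIntegral, flowTime, sub_zero, add_assoc] using
    stmt18_general (convex_flowDomain T) (zero_mem_flowDomain hT) hpos hA hC hlt rfl ht
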